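/- arXiv:1001.4652 — 2 statements merged into one kernel-verified Lean document; each statement's English description precedes it below -/
import Mathlib

section
/- The critical point −ω/2 of P_ω lies in the parabolic basin Λ_ω; that is, the critical orbit converges to the parabolic fixed point, P_ω^n(−ω/2) → 0 as n → ∞, and no iterate of the critical point equals 0, i.e. P_ω^n(−ω/2) ≠ 0 for all n ≥ 0. -/
open Complex Filter Topology Set

/-- The quadratic polynomial `P_ω(z) = ω z + z²`. -/
noncomputable def Pq (ω : ℂ) : ℂ → ℂ := fun z => ω * z + z ^ 2

/-- The augmented parabolic basin `Λ̃_ω`: points whose orbit converges to `0`. -/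
def basinAug (ω : ℂ) : Set ℂ := {z | Tendsto (fun n => (Pq ω)^[n] z) atTop (𝓝 0)}

/-- The backward orbit of the parabolic fixed point `0`. -/
def preFixed (ω : ℂ) : Set ℂ := {z | ∃ n : ℕ, (Pq ω)^[n] z = 0}

/-- The parabolic basin `Λ_ω`. -/
def basin (ω : ℂ) : Set ℂ := basinAug ω \ preFixed ω

/-!
Near a parabolic fixed point the attracting petal is parametrized by a right half-plane, on which
the polynomial `f` becomes a map `F` close to the unit translation. If no critical orbit entered the
petal, the parametrization `ζ` could be lifted through every iterate `fⁿ`, giving holomorphic maps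
`Gₙ` on the half-plane with `Gₙ ∘ Fⁿ = ζ`; they are uniformly bounded, because `f` has an escape
radius. But `Fⁿ w` lies at distance at least `n / 2` from the boundary of the half-plane while
`Fⁿ⁺¹ w` stays at bounded distance from `Fⁿ w`, so the Schwarz lemma gives
`ζ (F w) - ζ w = Gₙ (Fⁿ⁺¹ w) - Gₙ (Fⁿ w) = O(1 / n)`, hence `ζ (F w) = ζ w`, which contradicts the
injectivity of `ζ`. Thus every petal absorbs a critical orbit; for a multiplier of order `q` one
argues with `f^q`, whose critical points are preimages of those of `f`. The quadratic polynomial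
`P_ω` has only one critical point.
-/

open scoped Polynomial
open Polynomial (derivative)

section Dynamics

variable {X : Type*} [TopologicalSpace X] {f : X → X} {a z : X}

/-- The points whose orbit under `f` converges to `a` without ever reaching `a`. For `f = P_ω` and
`a = 0` this is the parabolic basin `Λ_ω`. -/
def properBasin (f : X → X) (a : X) : Set X :=
  {z | Tendsto (fun n => f^[n] z) atTop (𝓝 a) ∧ ∀ n, f^[n] z ≠ a}

lemma iterate_mem_properBasin (hz : z ∈ properBasin f a) (k : ℕ) : f^[k] z ∈ properBasin f a := by
  simp only [properBasin, mem_ofPred_eq, ← Function.iterate_add_apply]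
  exact ⟨(tendsto_add_atTop_iff_nat k).2 hz.1, fun n => hz.2 (n + k)⟩

lemma mem_properBasin_of_iterate_mem (ha : f a = a) {k : ℕ} (hz : f^[k] z ∈ properBasin f a) :
    z ∈ properBasin f a := by
  obtain ⟨hlim, hne⟩ := hz
  simp only [← Function.iterate_add_apply] at hlim hne
  refine ⟨(tendsto_add_atTop_iff_nat k).1 hlim, fun n hn => hne n ?_⟩
  rw [add_comm, Function.iterate_add_apply, hn, Function.iterate_fixed ha]

lemma tendsto_iterate_of_tendsto_iterate_iterate (hf : ContinuousAt f a) (ha : f a = a) {q : ℕ}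
    (hq : q ≠ 0) (hz : Tendsto (fun n => (f^[q])^[n] z) atTop (𝓝 a)) :
    Tendsto (fun n => f^[n] z) atTop (𝓝 a) := by
  refine tendsto_nhds.2 fun V hVo haV => ?_
  have hV : V ∈ 𝓝 a := hVo.mem_nhds haV
  have hresidues : ∀ᶠ y in 𝓝 a, ∀ j ∈ Finset.range q, f^[j] y ∈ V := by
    refine (eventually_all_finset _).2 fun j _ => (hf.iterate ha j).eventually_mem ?_
    rwa [Function.iterate_fixed ha]
  filter_upwards [(hz.comp (Nat.tendsto_div_const_atTop hq)).eventually hresidues] with n hn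
  have hsplit : f^[n % q] ((f^[q])^[n / q] z) = f^[n] z := by
    rw [← Function.iterate_mul, ← Function.iterate_add_apply, Nat.mod_add_div]
  rw [mem_preimage, ← hsplit]
  exact hn (n % q) (Finset.mem_range.2 (Nat.mod_lt n (Nat.pos_of_ne_zero hq)))

lemma properBasin_iterate_subset (hf : ContinuousAt f a) (ha : f a = a) {q : ℕ} (hq : q ≠ 0) :
    properBasin f^[q] a ⊆ properBasin f a := by
  rintro z ⟨hlim, hne⟩
  refine ⟨tendsto_iterate_of_tendsto_iterate_iterate hf ha hq hlim, fun n hn => hne n ?_⟩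
  obtain ⟨r, rfl⟩ := Nat.exists_eq_succ_of_ne_zero hq
  rw [← Function.iterate_mul, mul_comm, Function.iterate_mul, Function.iterate_succ_apply, hn,
    Function.iterate_fixed (Function.iterate_fixed ha n)]

end Dynamics

section Polynomials

lemma eval_iterate_comp_X {R : Type*} [CommSemiring R] (p : R[X]) (n : ℕ) (x : R) :
    (p.comp^[n] Polynomial.X).eval x = p.eval^[n] x := by
  rw [Polynomial.iterate_comp_eval, Polynomial.eval_X]

lemma eval_derivative_iterate_comp_X {R : Type*} [CommSemiring R] (p : R[X]) (n : ℕ) (x : R) :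
    (derivative (p.comp^[n] Polynomial.X)).eval x =
      ∏ i ∈ Finset.range n, (derivative p).eval (p.eval^[i] x) := by
  induction n with
  | zero => simp
  | succ n ih =>
    rw [Function.iterate_succ_apply', Polynomial.derivative_comp, Polynomial.eval_mul, ih,
      Polynomial.eval_comp, eval_iterate_comp_X, Finset.prod_range_succ]

lemma exists_eval_derivative_iterate_eq_zero {R : Type*} [CommSemiring R] [NoZeroDivisors R]
    [Nontrivial R] {p : R[X]} {n : ℕ} {x : R}
    (hx : (derivative (p.comp^[n] Polynomial.X)).eval x = 0) :
    ∃ i < n, (derivative p).eval (p.eval^[i] x) = 0 := by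
  simpa [eval_derivative_iterate_comp_X, Finset.prod_eq_zero_iff] using hx

lemma exists_eq_X_add_X_pow_mul {R : Type*} [CommRing R] {p : R[X]} (hp : p ≠ Polynomial.X)
    (hp0 : p.eval 0 = 0) (hp1 : (derivative p).eval 0 = 1) :
    ∃ m ≠ 0, ∃ g : R[X], g.eval 0 ≠ 0 ∧
      p = Polynomial.X + Polynomial.X ^ (m + 1) * g := by
  have hne : p - Polynomial.X ≠ 0 := sub_ne_zero.2 hp
  have hmult : 1 < (p - Polynomial.X).rootMultiplicity 0 :=
    (Polynomial.one_lt_rootMultiplicity_iff_isRoot hne).2 (by simp [hp0, hp1])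
  obtain ⟨g, hg, hndvd⟩ := (p - Polynomial.X).exists_eq_pow_rootMultiplicity_mul_and_not_dvd hne 0
  refine ⟨(p - Polynomial.X).rootMultiplicity 0 - 1, by omega, g,
    fun h => hndvd (Polynomial.dvd_iff_isRoot.2 h), ?_⟩
  rw [Nat.sub_add_cancel hmult.le]
  simpa [sub_eq_iff_eq_add'] using hg

lemma eventually_norm_le_norm_eval {𝕜 : Type*} [NormedField 𝕜] {p : 𝕜[X]}
    (hp : 2 ≤ p.natDegree) : ∀ᶠ z in Bornology.cobounded 𝕜, ‖z‖ ≤ ‖p.eval z‖ := by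
  have hdiv : Tendsto (fun z => ‖p.divX.eval z‖) (Bornology.cobounded 𝕜) atTop := by
    refine p.divX.tendsto_norm_atTop (Polynomial.natDegree_pos_iff_degree_pos.1 ?_)
      tendsto_norm_cobounded_atTop
    rw [Polynomial.natDegree_divX_eq_natDegree_tsub_one]
    omega
  filter_upwards [hdiv.eventually_ge_atTop 2,
    tendsto_norm_cobounded_atTop.eventually_ge_atTop ‖p.coeff 0‖] with z hslope hz
  calc ‖z‖ ≤ ‖p.divX.eval z‖ * ‖z‖ - ‖p.coeff 0‖ := by nlinarith [norm_nonneg z]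
    _ ≤ ‖p.divX.eval z * z + p.coeff 0‖ := by
      rw [← norm_mul]
      exact norm_sub_le_norm_add _ _
    _ = ‖p.eval z‖ := by
      conv_rhs => rw [← p.divX_mul_X_add]
      simp

lemma exists_norm_le_of_norm_iterate_eval_le {𝕜 : Type*} [NormedField 𝕜] {p : 𝕜[X]}
    (hp : 2 ≤ p.natDegree) (r : ℝ) : ∃ ρ, r ≤ ρ ∧ ∀ n z, ‖p.eval^[n] z‖ ≤ ρ → ‖z‖ ≤ ρ := by
  obtain ⟨s, -, hs⟩ := (hasBasis_cobounded_norm (E := 𝕜)).eventually_iff.1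
    (eventually_norm_le_norm_eval hp)
  have hescape : MapsTo p.eval {z | max r s < ‖z‖} {z | max r s < ‖z‖} := fun z hz =>
    lt_of_lt_of_le hz (hs ((le_max_right r s).trans (le_of_lt hz)))
  refine ⟨max r s, le_max_left r s, fun n z hz => ?_⟩
  by_contra! hlt
  exact (hescape.iterate n hlt).not_ge hz

end Polynomials

section Lifting

lemma eqOn_of_comp_eqOn_of_isCoveringMapOn {E X A : Type*} [TopologicalSpace E]
    [TopologicalSpace X] [TopologicalSpace A] {p : E → X} {t : Set X} (hp : IsCoveringMapOn p t)
    {s : Set A} (hs : IsPreconnected s) {g₁ g₂ : A → E} (h₁ : ContinuousOn g₁ s)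
    (h₂ : ContinuousOn g₂ s) (hcomp : EqOn (p ∘ g₁) (p ∘ g₂) s) (ht : MapsTo g₁ s (p ⁻¹' t))
    {a : A} (ha : a ∈ s) (hag : g₁ a = g₂ a) : EqOn g₁ g₂ s := by
  have := isPreconnected_iff_preconnectedSpace.1 hs
  have ht₂ : MapsTo g₂ s (p ⁻¹' t) := fun x hx => (hcomp hx).subst (motive := (· ∈ t)) (ht hx)
  have heq : MapsTo.restrict g₁ s (p ⁻¹' t) ht = MapsTo.restrict g₂ s (p ⁻¹' t) ht₂ :=
    hp.isCoveringMap_restrictPreimage.eq_of_comp_eq (h₁.mapsToRestrict ht)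
      (h₂.mapsToRestrict ht₂) (funext fun x => Subtype.ext (hcomp x.2)) ⟨a, ha⟩ (Subtype.ext hag)
  exact fun x hx => congrArg Subtype.val (congrFun heq ⟨x, hx⟩)

lemma exists_continuousOn_lift_of_isCoveringMapOn {E X A : Type*} [TopologicalSpace E]
    [TopologicalSpace X] [TopologicalSpace A] [LocallyPathConnectedSpace A] {p : E → X}
    {t : Set X} (hp : IsCoveringMapOn p t) {U : Set A} (hU : IsOpen U) (hUs : IsSimplyConnected U)
    {h : A → X} (hh : ContinuousOn h U) (ht : MapsTo h U t) {a : A} (ha : a ∈ U) {e : E}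
    (he : p e = h a) : ∃ g : A → E, ContinuousOn g U ∧ EqOn (p ∘ g) h U ∧ g a = e := by
  classical
  have := hUs.simplyConnectedSpace
  have := hU.locallyPathConnectedSpace
  obtain ⟨g, ⟨hga, hg⟩, -⟩ := hp.existsUnique_continuousMap_lifts ⟨U.domRestrict h,
    hh.domRestrict⟩ (a₀ := ⟨a, ha⟩) he fun x => ht x.2
  let g' : A → E := fun x => if hx : x ∈ U then g ⟨x, hx⟩ else e
  have hg' : U.domRestrict g' = g := by
    ext x
    simp [g']
  refine ⟨g', ?_, fun x hx => ?_, ?_⟩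
  · rw [continuousOn_iff_continuous_domRestrict, hg']
    exact g.continuous
  · simpa [g', hx] using congrFun hg ⟨x, hx⟩
  · simp [g', ha, hga]

lemma exists_differentiableOn_lift {p : ℂ[X]} {U : Set ℂ} (hU : IsOpen U)
    (hUs : IsSimplyConnected U) {h : ℂ → ℂ} (hh : DifferentiableOn ℂ h U)
    (hcrit : ∀ y, (derivative p).eval y = 0 → p.eval y ∉ h '' U) {a y : ℂ} (ha : a ∈ U)
    (hy : p.eval y = h a) :
    ∃ g : ℂ → ℂ, DifferentiableOn ℂ g U ∧ EqOn (p.eval ∘ g) h U ∧ g a = y := by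
  have havoid : MapsTo h U (p.eval '' {y | (derivative p).eval y = 0})ᶜ := by
    rintro w hw ⟨y, hy, hyw⟩
    exact hcrit y hy ⟨w, hw, hyw.symm⟩
  obtain ⟨g, hgc, hpg, hga⟩ := exists_continuousOn_lift_of_isCoveringMapOn p.isCoveringMapOn_eval
    hU hUs hh.continuousOn havoid ha hy
  refine ⟨g, fun w hw => ?_, hpg, hga⟩
  have hUw : U ∈ 𝓝 w := hU.mem_nhds hw
  have hderiv : (derivative p).eval (g w) ≠ 0 := fun h0 =>
    hcrit _ h0 ⟨w, hw, (hpg hw).symm⟩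
  exact ((p.hasDerivAt (g w)).of_comp_left (hgc.continuousAt hUw)
    (hh.differentiableAt hUw).hasDerivAt hderiv
    (hpg.eventuallyEq_of_mem hUw)).differentiableAt.differentiableWithinAt

end Lifting

section Petals

/-- The inverse branch `w ↦ b w^(-1/m)` of the approximate Fatou coordinate `z ↦ (b / z)^m` at a
parabolic fixed point `0` of multiplicity `m + 1`. -/
noncomputable def petalParam (m : ℕ) (b w : ℂ) : ℂ := b * exp (-log w / m)

/-- The map `z ↦ z + z^(m+1) g(z)` read in the coordinate `z = petalParam m b w`. -/
noncomputable def petalLift (m : ℕ) (b : ℂ) (g : ℂ → ℂ) (w : ℂ) : ℂ :=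
  w / (1 + petalParam m b w ^ m * g (petalParam m b w)) ^ m

variable {m : ℕ} {b w : ℂ} {g : ℂ → ℂ}

lemma petalParam_ne_zero (hb : b ≠ 0) (w : ℂ) : petalParam m b w ≠ 0 :=
  mul_ne_zero hb (exp_ne_zero _)

lemma petalParam_pow (hm : m ≠ 0) (b : ℂ) (hw : w ≠ 0) : petalParam m b w ^ m = b ^ m / w := by
  rw [petalParam, mul_pow, ← Complex.exp_nat_mul, mul_div_cancel₀ _ (Nat.cast_ne_zero.2 hm),
    Complex.exp_neg, Complex.exp_log hw, div_eq_mul_inv]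

lemma injOn_petalParam (hm : m ≠ 0) (hb : b ≠ 0) : InjOn (petalParam m b) {0}ᶜ := by
  intro w hw w' hw' heq
  have hpow : b ^ m / w = b ^ m / w' := by
    rw [← petalParam_pow hm b hw, ← petalParam_pow hm b hw', heq]
  simpa [div_eq_mul_inv, hb] using hpow

lemma differentiableAt_petalParam (hw : w ∈ slitPlane) : DifferentiableAt ℂ (petalParam m b) w :=
  ((differentiableAt_log hw).neg.div_const _).cexp.const_mul b

lemma norm_petalParam (m : ℕ) (b w : ℂ) :
    ‖petalParam m b w‖ = ‖b‖ * Real.exp (-(Real.log ‖w‖ / m)) := by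
  rw [petalParam, norm_mul, Complex.norm_exp, Complex.div_natCast_re, neg_re, log_re, neg_div]

lemma tendsto_petalParam (hm : m ≠ 0) (b : ℂ) :
    Tendsto (petalParam m b) (Bornology.cobounded ℂ) (𝓝 0) := by
  have hexp : Tendsto (fun w : ℂ => Real.exp (-(Real.log ‖w‖ / m))) (Bornology.cobounded ℂ)
      (𝓝 0) :=
    Real.tendsto_exp_neg_atTop_nhds_zero.comp
      ((Real.tendsto_log_atTop.comp tendsto_norm_cobounded_atTop).atTop_div_const
        (Nat.cast_pos.2 (Nat.pos_of_ne_zero hm)))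
  rw [tendsto_zero_iff_norm_tendsto_zero]
  simpa only [norm_petalParam, mul_zero] using hexp.const_mul ‖b‖

lemma log_div_pow {v : ℂ} (hw : 0 < w.re) (hv : v ≠ 0) (harg : m * |arg v| < Real.pi / 2) :
    log (w / v ^ m) = log w - m * log v := by
  have hw0 : w ≠ 0 := by
    rintro rfl
    simp at hw
  have hargw : |arg w| < Real.pi / 2 := abs_arg_lt_pi_div_two_iff.2 (Or.inl hw)
  have him : |(log w - m * log v).im| < Real.pi := calc
    |(log w - m * log v).im| = |arg w - m * arg v| := by simp [log_im]
    _ ≤ |arg w| + m * |arg v| := by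
      simpa [abs_mul] using abs_sub (arg w) (m * arg v)
    _ < Real.pi := by linarith
  have hexp : w / v ^ m = exp (log w - m * log v) := by
    rw [Complex.exp_sub, Complex.exp_log hw0, Complex.exp_nat_mul, Complex.exp_log hv]
  rw [hexp, Complex.log_exp (abs_lt.1 him).1 (abs_lt.1 him).2.le]

lemma petalParam_div_pow (hm : m ≠ 0) (b : ℂ) {v : ℂ} (hw : 0 < w.re) (hv : v ≠ 0)
    (harg : m * |arg v| < Real.pi / 2) : petalParam m b (w / v ^ m) = petalParam m b w * v := by
  have hm' : (m : ℂ) ≠ 0 := Nat.cast_ne_zero.2 hm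
  have hsplit : -(log w - m * log v) / m = -log w / m + log v := by
    field_simp
    ring
  rw [petalParam, log_div_pow hw hv harg, hsplit, Complex.exp_add, Complex.exp_log hv, petalParam,
    mul_assoc]

lemma tendsto_div_one_add_pow_sub {𝕜 α : Type*} [NontriviallyNormedField 𝕜] {l : Filter α}
    {w u : α → 𝕜} {a : 𝕜} (m : ℕ)
    (hu : Tendsto u l (𝓝 0)) (hwu : Tendsto (fun x => w x * u x) l (𝓝 a)) :
    Tendsto (fun x => w x / (1 + u x) ^ m - w x) l (𝓝 (a * -m)) := by
  let k : 𝕜 → 𝕜 := fun y => ((1 + y) ^ m)⁻¹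
  have hk : HasDerivAt k (-m) 0 := by
    have hpow : HasDerivAt (fun y : 𝕜 => (1 + y) ^ m) (m * (1 + 0) ^ (m - 1) * 1) 0 :=
      ((hasDerivAt_id (0 : 𝕜)).const_add 1).pow m
    exact (hpow.inv (by simp)).congr_deriv (by simp)
  have hslope : Tendsto (dslope k 0) (𝓝 0) (𝓝 (-m)) := by
    simpa only [dslope_same, hk.deriv] using
      (continuousAt_dslope_same.2 hk.differentiableAt).tendsto
  refine (hwu.mul (hslope.comp hu)).congr fun x => ?_
  have hdslope : u x * dslope k 0 (u x) = ((1 + u x) ^ m)⁻¹ - 1 := by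
    simpa [k] using sub_smul_dslope k 0 (u x)
  rw [Function.comp_apply, mul_assoc, hdslope]
  ring

lemma tendsto_petalParam_pow_mul (hm : m ≠ 0) (b : ℂ) (hg : ContinuousAt g 0) :
    Tendsto (fun w => petalParam m b w ^ m * g (petalParam m b w)) (Bornology.cobounded ℂ)
      (𝓝 0) := by
  simpa [hm] using ((tendsto_petalParam hm b).pow m).mul
    (hg.tendsto.comp (tendsto_petalParam hm b))

lemma tendsto_petalFactor (hm : m ≠ 0) (b : ℂ) (hg : ContinuousAt g 0) :
    Tendsto (fun w => 1 + petalParam m b w ^ m * g (petalParam m b w)) (Bornology.cobounded ℂ)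
      (𝓝 1) := by
  simpa using (tendsto_petalParam_pow_mul hm b hg).const_add 1

lemma eventually_petalFactor_ne_zero (hm : m ≠ 0) (b : ℂ) (hg : ContinuousAt g 0) :
    ∀ᶠ w in Bornology.cobounded ℂ, 1 + petalParam m b w ^ m * g (petalParam m b w) ≠ 0 :=
  (tendsto_petalFactor hm b hg).eventually_ne one_ne_zero

lemma eventually_petalParam_petalLift (hm : m ≠ 0) (b : ℂ) (hg : ContinuousAt g 0) :
    ∀ᶠ w in Bornology.cobounded ℂ, 0 < w.re → petalParam m b (petalLift m b g w) =
      petalParam m b w + petalParam m b w ^ (m + 1) * g (petalParam m b w) := by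
  have harg : Tendsto (fun v => m * |arg v|) (𝓝 1) (𝓝 0) := by
    simpa using ((continuousAt_arg one_mem_slitPlane).abs.const_mul (m : ℝ)).tendsto
  filter_upwards [eventually_petalFactor_ne_zero hm b hg,
    (harg.comp (tendsto_petalFactor hm b hg)).eventually_lt_const Real.pi_div_two_pos]
    with w hne hsmall hw
  rw [petalLift, petalParam_div_pow hm b hw hne hsmall]
  ring

lemma tendsto_petalLift_sub (hm : m ≠ 0) (hg : ContinuousAt g 0) (hb : b ^ m * g 0 * -m = 1) :
    Tendsto (fun w => petalLift m b g w - w) (Bornology.cobounded ℂ) (𝓝 1) := by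
  rw [← hb]
  refine tendsto_div_one_add_pow_sub m (tendsto_petalParam_pow_mul hm b hg) ?_
  refine ((hg.tendsto.comp (tendsto_petalParam hm b)).const_mul (b ^ m)).congr' ?_
  filter_upwards [Bornology.eventually_ne_cobounded 0] with w hw
  rw [petalParam_pow hm b hw, Function.comp_apply]
  field_simp

lemma exists_forall_re_of_eventually_cobounded {Q : ℂ → Prop}
    (hQ : ∀ᶠ w in Bornology.cobounded ℂ, Q w) : ∃ R > 0, ∀ w : ℂ, R < w.re → Q w := by
  obtain ⟨r, -, hr⟩ := hasBasis_cobounded_norm.eventually_iff.1 hQ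
  refine ⟨max r 1, by positivity, fun w hw => hr ?_⟩
  exact (le_max_left r 1).trans (hw.le.trans (re_le_norm w))

/-- An attracting petal of `f` at `0`, parametrized by a right half-plane on which `f` becomes
almost the unit translation: `param` parametrizes the petal by `{w | abscissa < w.re}`, and `lift`
is `f` read in this parameter. The values of `param` and `lift` off the half-plane are irrelevant,
and the constants `1` and `1 / 2` can be reached by shrinking any petal. -/
structure AttractingPetal (f : ℂ → ℂ) where
  abscissa : ℝ
  param : ℂ → ℂ
  lift : ℂ → ℂ
  differentiableOn_param : DifferentiableOn ℂ param {w | abscissa < w.re}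
  injOn_param : InjOn param {w | abscissa < w.re}
  param_ne_zero : ∀ w, abscissa < w.re → param w ≠ 0
  norm_param_le_one : ∀ w, abscissa < w.re → ‖param w‖ ≤ 1
  tendsto_param : Tendsto param (comap re atTop) (𝓝 0)
  continuousOn_lift : ContinuousOn lift {w | abscissa < w.re}
  norm_lift_sub_le : ∀ w, abscissa < w.re → ‖lift w - w - 1‖ ≤ 1 / 2
  apply_param : ∀ w, abscissa < w.re → f (param w) = param (lift w)

lemma comap_re_atTop_le_cobounded : comap re atTop ≤ Bornology.cobounded ℂ := by
  rw [← comap_norm_atTop]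
  exact tendsto_iff_comap.1 (tendsto_atTop_mono re_le_norm tendsto_comap)

lemma exists_ne_zero_pow_mul_mul_neg_eq_one (hm : m ≠ 0) {a : ℂ} (ha : a ≠ 0) :
    ∃ b : ℂ, b ≠ 0 ∧ b ^ m * a * -m = 1 := by
  have hm' : (m : ℂ) ≠ 0 := Nat.cast_ne_zero.2 hm
  obtain ⟨b, hb⟩ : ∃ b : ℂ, b ^ m = -1 / (m * a) :=
    IsAlgClosed.exists_pow_nat_eq _ (Nat.pos_of_ne_zero hm)
  have hnorm : b ^ m * a * -m = 1 := by
    rw [hb]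
    field_simp
  refine ⟨b, ?_, hnorm⟩
  rintro rfl
  simp [hm] at hnorm

theorem nonempty_attractingPetal {f : ℂ → ℂ} (hm : m ≠ 0) (hg : Continuous g) (hg0 : g 0 ≠ 0)
    (hf : ∀ z, f z = z + z ^ (m + 1) * g z) : Nonempty (AttractingPetal f) := by
  obtain ⟨b, hb0, hnorm⟩ := exists_ne_zero_pow_mul_mul_neg_eq_one hm hg0
  have hbound : ∀ᶠ w in Bornology.cobounded ℂ, ‖petalParam m b w‖ ≤ 1 :=
    (tendsto_petalParam hm b).norm.eventually_le_const (by simp)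
  have hlift : ∀ᶠ w in Bornology.cobounded ℂ, ‖petalLift m b g w - w - 1‖ ≤ 1 / 2 := by
    simpa [dist_eq_norm] using (tendsto_petalLift_sub hm hg.continuousAt hnorm).eventually
      (Metric.closedBall_mem_nhds 1 (by norm_num : (0 : ℝ) < 1 / 2))
  obtain ⟨R, hR, hpetal⟩ := exists_forall_re_of_eventually_cobounded
    (hbound.and (hlift.and ((eventually_petalFactor_ne_zero hm b hg.continuousAt).and
      (eventually_petalParam_petalLift hm b hg.continuousAt))))
  choose hbound hlift hfactor hconj using hpetal
  have hdiff : DifferentiableOn ℂ (petalParam m b) {w | R < w.re} := fun w hw =>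
    (differentiableAt_petalParam (Or.inl (hR.trans hw))).differentiableWithinAt
  have hne_zero : {w : ℂ | R < w.re} ⊆ {0}ᶜ := by
    rintro w hw rfl
    exact hR.not_gt hw
  exact ⟨{
    abscissa := R
    param := petalParam m b
    lift := petalLift m b g
    differentiableOn_param := hdiff
    injOn_param := (injOn_petalParam hm hb0).mono hne_zero
    param_ne_zero := fun w _ => petalParam_ne_zero hb0 w
    norm_param_le_one := hbound
    tendsto_param := (tendsto_petalParam hm b).mono_left comap_re_atTop_le_cobounded
    continuousOn_lift := continuousOn_id.div
      ((continuousOn_const.add ((hdiff.continuousOn.pow m).mul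
        (hg.comp_continuousOn hdiff.continuousOn))).pow m)
      fun w hw => pow_ne_zero m (hfactor w hw)
    norm_lift_sub_le := hlift
    apply_param := fun w hw => (hf _).trans (hconj w hw (hR.trans hw)).symm }⟩

end Petals

namespace AttractingPetal

section Iteration

variable {f : ℂ → ℂ} (P : AttractingPetal f) {w : ℂ}

/-- The half-plane that parametrizes the petal. -/
def halfPlane : Set ℂ := {w | P.abscissa < w.re}

lemma isOpen_halfPlane : IsOpen P.halfPlane := isOpen_lt continuous_const continuous_re

lemma convex_halfPlane : Convex ℝ P.halfPlane := convex_halfSpace_re_gt P.abscissa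

lemma nonempty_halfPlane : P.halfPlane.Nonempty :=
  ⟨(P.abscissa + 1 : ℝ), (lt_add_one P.abscissa).trans_eq (ofReal_re _).symm⟩

lemma isSimplyConnected_halfPlane : IsSimplyConnected P.halfPlane := by
  have := P.convex_halfPlane.contractibleSpace P.nonempty_halfPlane
  exact SimplyConnectedSpace.ofContractible _

lemma re_add_half_le_re_lift (hw : w ∈ P.halfPlane) : w.re + 1 / 2 ≤ (P.lift w).re := by
  have hre := (abs_le.1 ((abs_re_le_norm _).trans (P.norm_lift_sub_le w hw))).1
  simp only [sub_re, one_re] at hre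
  linarith

lemma mapsTo_lift : MapsTo P.lift P.halfPlane P.halfPlane := fun _ hw =>
  lt_of_lt_of_le hw ((le_add_of_nonneg_right one_half_pos.le).trans (P.re_add_half_le_re_lift hw))

lemma mapsTo_iterate_lift (n : ℕ) : MapsTo P.lift^[n] P.halfPlane P.halfPlane :=
  P.mapsTo_lift.iterate n

lemma re_add_le_re_iterate_lift (hw : w ∈ P.halfPlane) (n : ℕ) :
    w.re + n / 2 ≤ (P.lift^[n] w).re := by
  induction n with
  | zero => simp
  | succ n ih =>
    rw [Function.iterate_succ_apply']
    push_cast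
    linarith [P.re_add_half_le_re_lift (P.mapsTo_iterate_lift n hw)]

lemma ball_iterate_lift_subset (hw : w ∈ P.halfPlane) (n : ℕ) :
    Metric.ball (P.lift^[n] w) (n / 2) ⊆ P.halfPlane := by
  intro v hv
  have hre : |(v - P.lift^[n] w).re| < n / 2 :=
    (abs_re_le_norm _).trans_lt (mem_ball_iff_norm.1 hv)
  rw [sub_re] at hre
  have hw' : P.abscissa < w.re := hw
  change P.abscissa < v.re
  linarith [(abs_lt.1 hre).1, P.re_add_le_re_iterate_lift hw n]

lemma dist_lift_le (hw : w ∈ P.halfPlane) : dist (P.lift w) w ≤ 3 / 2 := calc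
  dist (P.lift w) w = ‖(P.lift w - w - 1) + 1‖ := by rw [sub_add_cancel, dist_eq_norm]
  _ ≤ 1 / 2 + 1 := (norm_add_le _ _).trans (by simpa using P.norm_lift_sub_le w hw)
  _ = 3 / 2 := by norm_num

lemma param_lift_ne (hw : w ∈ P.halfPlane) : P.param (P.lift w) ≠ P.param w := by
  intro heq
  have hfixed : P.lift w = w := P.injOn_param (P.mapsTo_lift hw) hw heq
  have hre := P.re_add_half_le_re_lift hw
  rw [hfixed] at hre
  linarith

lemma iterate_param (hw : w ∈ P.halfPlane) (n : ℕ) :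
    f^[n] (P.param w) = P.param (P.lift^[n] w) := by
  induction n with
  | zero => rfl
  | succ n ih =>
    rw [Function.iterate_succ_apply', Function.iterate_succ_apply', ih,
      P.apply_param _ (P.mapsTo_iterate_lift n hw)]

theorem param_mem_properBasin (hw : w ∈ P.halfPlane) : P.param w ∈ properBasin f 0 := by
  simp only [properBasin, mem_ofPred_eq, P.iterate_param hw]
  refine ⟨P.tendsto_param.comp (tendsto_comap_iff.2 ?_), fun n =>
    P.param_ne_zero _ (P.mapsTo_iterate_lift n hw)⟩
  exact tendsto_atTop_mono (P.re_add_le_re_iterate_lift hw) (tendsto_atTop_add_const_left _ _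
    (tendsto_natCast_atTop_atTop.atTop_div_const two_pos))

lemma dist_param_lift_le {G : ℂ → ℂ} {ρ : ℝ} {n : ℕ} (hn : 4 ≤ n)
    (hG : DifferentiableOn ℂ G P.halfPlane) (hρ : ∀ v ∈ P.halfPlane, ‖G v‖ ≤ ρ)
    (hGζ : EqOn (G ∘ P.lift^[n]) P.param P.halfPlane) (hw : w ∈ P.halfPlane) :
    dist (P.param (P.lift w)) (P.param w) ≤ 6 * ρ / n := by
  have hball := P.ball_iterate_lift_subset hw n
  have hmaps : MapsTo G (Metric.ball (P.lift^[n] w) (n / 2))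
      (Metric.closedBall (G (P.lift^[n] w)) (2 * ρ)) := fun v hv =>
    (dist_le_norm_add_norm _ _).trans
      (by linarith [hρ v (hball hv), hρ _ (P.mapsTo_iterate_lift n hw)])
  have hstep : dist (P.lift (P.lift^[n] w)) (P.lift^[n] w) ≤ 3 / 2 :=
    P.dist_lift_le (P.mapsTo_iterate_lift n hw)
  have hn' : (4 : ℝ) ≤ n := by exact_mod_cast hn
  have hρ0 : 0 ≤ ρ := (norm_nonneg _).trans (hρ w hw)
  calc dist (P.param (P.lift w)) (P.param w)
      = dist (G (P.lift (P.lift^[n] w))) (G (P.lift^[n] w)) := by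
        rw [← hGζ hw, ← hGζ (P.mapsTo_lift hw), Function.comp_apply, Function.comp_apply,
          ← Function.iterate_succ_apply, Function.iterate_succ_apply']
    _ ≤ 2 * ρ / (n / 2) * dist (P.lift (P.lift^[n] w)) (P.lift^[n] w) :=
        dist_le_div_mul_dist_of_mapsTo_ball (hG.mono hball) hmaps
          (Metric.mem_ball.2 (by linarith))
    _ ≤ 2 * ρ / (n / 2) * (3 / 2) := by gcongr
    _ = 6 * ρ / n := by
        field_simp
        ring

lemma not_forall_exists_lift_iterate (ρ : ℝ) :
    ¬ ∀ n : ℕ, ∃ G : ℂ → ℂ, DifferentiableOn ℂ G P.halfPlane ∧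
      (∀ v ∈ P.halfPlane, ‖G v‖ ≤ ρ) ∧ EqOn (G ∘ P.lift^[n]) P.param P.halfPlane := by
  intro h
  choose G hG hρ hGζ using h
  obtain ⟨w, hw⟩ := P.nonempty_halfPlane
  have hle : dist (P.param (P.lift w)) (P.param w) ≤ 0 :=
    ge_of_tendsto (tendsto_const_div_atTop_nhds_zero_nat (6 * ρ)) <| by
      filter_upwards [eventually_ge_atTop 4] with n hn
      exact P.dist_param_lift_le hn (hG n) (hρ n) (hGζ n) hw
  exact P.param_lift_ne hw (dist_le_zero.1 hle)

end Iteration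

section CriticalOrbits

variable {p : ℂ[X]} (P : AttractingPetal p.eval)

lemma exists_lift_iterate
    (hcrit : ∀ c, (derivative p).eval c = 0 → ∀ k, p.eval^[k] c ∉ P.param '' P.halfPlane) (n : ℕ) :
    ∃ G : ℂ → ℂ, DifferentiableOn ℂ G P.halfPlane ∧
      EqOn (p.eval^[n] ∘ G) P.param P.halfPlane ∧
      EqOn (G ∘ P.lift^[n]) P.param P.halfPlane := by
  have hcrit_n : ∀ y, (derivative (p.comp^[n] Polynomial.X)).eval y = 0 →
      (p.comp^[n] Polynomial.X).eval y ∉ P.param '' P.halfPlane := by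
    intro y hy
    obtain ⟨i, hi, hyi⟩ := exists_eval_derivative_iterate_eq_zero hy
    rw [eval_iterate_comp_X, ← Nat.sub_add_cancel hi.le, Function.iterate_add_apply]
    exact hcrit _ hyi _
  obtain ⟨w, hw⟩ := P.nonempty_halfPlane
  obtain ⟨G, hG, hpG, hGw⟩ := exists_differentiableOn_lift (a := P.lift^[n] w) (y := P.param w)
    P.isOpen_halfPlane P.isSimplyConnected_halfPlane P.differentiableOn_param hcrit_n
    (P.mapsTo_iterate_lift n hw) (by rw [eval_iterate_comp_X, P.iterate_param hw])
  have hiter := P.mapsTo_iterate_lift n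
  refine ⟨G, hG, fun v hv => (eval_iterate_comp_X p n _).symm.trans (hpG hv), ?_⟩
  refine eqOn_of_comp_eqOn_of_isCoveringMapOn (p.comp^[n] Polynomial.X).isCoveringMapOn_eval
    P.convex_halfPlane.isPreconnected
    (hG.continuousOn.comp (P.continuousOn_lift.iterate P.mapsTo_lift n) hiter)
    P.differentiableOn_param.continuousOn (fun v hv => ?_) (fun v hv => ?_) hw hGw
  · simpa [eval_iterate_comp_X, P.iterate_param hv] using hpG (hiter hv)
  · rintro ⟨y, hy, hyv⟩
    refine hcrit_n y hy ⟨_, hiter hv, ?_⟩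
    rw [← hpG (hiter hv)]
    exact hyv.symm

theorem exists_critical_point_iterate_mem (hp : 2 ≤ p.natDegree) :
    ∃ c, (derivative p).eval c = 0 ∧ ∃ k, p.eval^[k] c ∈ P.param '' P.halfPlane := by
  by_contra! hcrit
  obtain ⟨ρ, hρ, hescape⟩ := exists_norm_le_of_norm_iterate_eval_le hp 1
  refine P.not_forall_exists_lift_iterate ρ fun n => ?_
  obtain ⟨G, hG, hpG, hGζ⟩ := P.exists_lift_iterate hcrit n
  refine ⟨G, hG, fun v hv => hescape n _ ?_, hGζ⟩
  rw [← Function.comp_apply (f := p.eval^[n]), hpG hv]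
  exact (P.norm_param_le_one v hv).trans hρ

end CriticalOrbits

end AttractingPetal

section Fatou

theorem exists_critical_point_mem_properBasin_of_derivative_eq_one {p : ℂ[X]}
    (hp : 2 ≤ p.natDegree) (hp0 : p.eval 0 = 0) (hp1 : (derivative p).eval 0 = 1) :
    ∃ c, (derivative p).eval c = 0 ∧ c ∈ properBasin p.eval 0 := by
  have hpX : p ≠ Polynomial.X := by
    rintro rfl
    simp at hp
  obtain ⟨m, hm, g, hg0, hpg⟩ := exists_eq_X_add_X_pow_mul hpX hp0 hp1
  obtain ⟨P⟩ : Nonempty (AttractingPetal p.eval) :=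
    nonempty_attractingPetal hm g.continuous hg0 fun z => by simp [hpg]
  obtain ⟨c, hc, k, w, hw, hk⟩ := P.exists_critical_point_iterate_mem hp
  exact ⟨c, hc, mem_properBasin_of_iterate_mem hp0 (hk ▸ P.param_mem_properBasin hw)⟩

theorem exists_critical_point_mem_properBasin {p : ℂ[X]} (hp : 2 ≤ p.natDegree)
    (hp0 : p.eval 0 = 0) {q : ℕ} (hq : q ≠ 0) (hpq : (derivative p).eval 0 ^ q = 1) :
    ∃ c, (derivative p).eval c = 0 ∧ c ∈ properBasin p.eval 0 := by
  have hfix (n : ℕ) : p.eval^[n] 0 = 0 := Function.iterate_fixed (f := p.eval) hp0 n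
  have hdeg : 2 ≤ (p.comp^[q] Polynomial.X).natDegree := by
    rw [Polynomial.natDegree_iterate_comp, Polynomial.natDegree_X, mul_one]
    exact hp.trans (Nat.le_self_pow hq _)
  have hderiv : (derivative (p.comp^[q] Polynomial.X)).eval 0 = 1 := by
    simp [eval_derivative_iterate_comp_X, hfix, hpq]
  obtain ⟨z, hz, hzbasin⟩ := exists_critical_point_mem_properBasin_of_derivative_eq_one hdeg
    (by rw [eval_iterate_comp_X, hfix]) hderiv
  simp only [eval_iterate_comp_X] at hzbasin
  obtain ⟨i, -, hi⟩ := exists_eval_derivative_iterate_eq_zero hz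
  exact ⟨p.eval^[i] z, hi,
    iterate_mem_properBasin (properBasin_iterate_subset p.continuousAt hp0 hq hzbasin) i⟩

end Fatou

theorem critical_point_in_basin_general {ω : ℂ} {q : ℕ} (hq : q ≠ 0) (hω : ω ^ q = 1) :
    Tendsto (fun n => (Pq ω)^[n] (-ω / 2)) atTop (𝓝 0) ∧
    (∀ n : ℕ, (Pq ω)^[n] (-ω / 2) ≠ 0) := by
  let p : ℂ[X] := Polynomial.X ^ 2 + Polynomial.C ω * Polynomial.X
  have heval : p.eval = Pq ω := by
    ext z
    simp [p, Pq, add_comm]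
  have hderiv (z : ℂ) : (derivative p).eval z = 2 * z + ω := by simp [p, one_add_one_eq_two]
  have hdeg : p.natDegree = 2 := by
    simp only [p]
    compute_degree!
  obtain ⟨c, hc, hcbasin⟩ := exists_critical_point_mem_properBasin hdeg.ge (by simp [p]) hq
    (by simp [hderiv, hω])
  have hcω : c = -ω / 2 := by linear_combination ((hderiv c).symm.trans hc) / 2
  rwa [heval, hcω] at hcbasin

/-- The critical point `-ω/2` of `P_ω` lies in the parabolic
basin `Λ_ω`: its orbit converges to the parabolic fixed point `0`, and no
iterate of the critical point equals `0`. -/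
theorem critical_point_in_basin
    (p q : ℕ) (hq : 2 ≤ q) (hp0 : 0 < p) (hpq : p < q) (hcop : Nat.Coprime p q)
    (ω : ℂ) (hω : ω = Complex.exp (2 * Real.pi * Complex.I * (p : ℂ) / (q : ℂ))) :
    Tendsto (fun n => (Pq ω)^[n] (-ω / 2)) atTop (𝓝 0) ∧
    (∀ n : ℕ, (Pq ω)^[n] (-ω / 2) ≠ 0) := by
  have hroot : ω ^ q = 1 := by
    rw [hω, mul_div_assoc, (isPrimitiveRoot_exp_of_coprime p q (by omega) hcop).pow_eq_one]
  exact critical_point_in_basin_general (by omega) hroot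
end

section
/- The parabolic fixed point lies on the boundary of its basin: 0 ∉ Λ_ω but 0 belongs to the closure of Λ_ω, i.e. 0 is in the frontier of the parabolic basin Λ_ω. -/
open Complex Filter Topology Set

/-!
Write `F = f^[q]`, where the multiplier of `f` at its fixed point `a` is a `q`-th root of unity.
Unless `F` is the identity near `a`, `F z = z + (z - a) ^ (m + 1) * g z` with `1 ≤ m` and `g a ≠ 0`.
In the coordinate `w = -(g a)⁻¹ / (z - a) ^ m`, which sends `a` to infinity, `F` acts as
`w ↦ w + m + o(1)`. Hence orbits starting in a half-plane `R < Re w` with `R` large drift to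
infinity, that is, they converge to `a` in the `z`-plane without ever reaching it, and these
half-planes contain points arbitrarily close to `a`. For `f = P_ω`, an iterate that is the identity
near `0` would be the identity everywhere, contradicting `P_ω (-ω) = P_ω 0`.
-/

section Iteration

variable {X : Type*}

lemma eventually_forall_add_mul_le_iterate {F : X → X} {h : X → ℝ} {ε : ℝ} (hε : 0 ≤ ε)
    (hstep : ∀ᶠ x in comap h atTop, h x + ε ≤ h (F x)) :
    ∀ᶠ x in comap h atTop, ∀ n : ℕ, h x + n * ε ≤ h (F^[n] x) := by
  obtain ⟨R, -, hR⟩ := (atTop_basis.comap h).eventually_iff.1 hstep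
  refine (atTop_basis.comap h).eventually_iff.2 ⟨R, trivial, fun x hx n ↦ ?_⟩
  induction n with
  | zero => simp
  | succ n ih =>
    have hRx : R ≤ h x := hx
    have hRn : R ≤ h (F^[n] x) := by nlinarith [mul_nonneg n.cast_nonneg hε]
    have := hR hRn
    rw [Function.iterate_succ_apply']
    push_cast
    linarith

lemma eventually_tendsto_iterate_comap_atTop {F : X → X} {h : X → ℝ} {ε : ℝ} (hε : 0 < ε)
    (hstep : ∀ᶠ x in comap h atTop, h x + ε ≤ h (F x)) :
    ∀ᶠ x in comap h atTop, Tendsto (fun n ↦ F^[n] x) atTop (comap h atTop) := by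
  filter_upwards [eventually_forall_add_mul_le_iterate hε.le hstep] with x hx
  have hlinear : Tendsto (fun n : ℕ ↦ h x + n * ε) atTop atTop :=
    tendsto_atTop_add_const_left _ _ (tendsto_natCast_atTop_atTop.atTop_mul_const hε)
  exact tendsto_comap_iff.2 (tendsto_atTop_mono hx hlinear)

lemma tendsto_iterate_of_tendsto_iterate_iterate_s4 {f : X → X} {l : Filter X} {x : X} {q : ℕ}
    (hq : q ≠ 0) (hf : Tendsto f l l) (hx : Tendsto (fun n ↦ (f^[q])^[n] x) atTop l) :
    Tendsto (fun n ↦ f^[n] x) atTop l := by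
  refine tendsto_def.2 fun U hU ↦ ?_
  have hresidues : ∀ᶠ n in atTop, ∀ r ∈ Finset.range q, f^[r] ((f^[q])^[n] x) ∈ U :=
    (eventually_all_finset _).2 fun r _ ↦ ((hf.iterate r).comp hx).eventually_mem hU
  filter_upwards [(Nat.tendsto_div_const_atTop hq).eventually hresidues] with n hn
  have := hn (n % q) (Finset.mem_range.2 (Nat.mod_lt n hq.bot_lt))
  rwa [← Function.iterate_mul, ← Function.iterate_add_apply, Nat.mod_add_div] at this

end Iteration

section LocalExpansion

variable {𝕜 : Type*} [NontriviallyNormedField 𝕜]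

lemma hasDerivAt_inv_one_add_pow (m : ℕ) :
    HasDerivAt (fun u : 𝕜 ↦ ((1 + u) ^ m)⁻¹) (-m) 0 := by
  have hpow : HasDerivAt (fun u : 𝕜 ↦ (1 + u) ^ m) m 0 := by
    simpa using ((hasDerivAt_id' (0 : 𝕜)).const_add 1).fun_pow m
  simpa using hpow.fun_inv (by simp)

lemma exists_eventually_eq_add_pow_mul [CharZero 𝕜] [CompleteSpace 𝕜] {F : 𝕜 → 𝕜} {a : 𝕜}
    (hF : AnalyticAt 𝕜 F a) (hFa : F a = a) (hF' : deriv F a = 1)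
    (hid : ¬ ∀ᶠ z in 𝓝 a, F z = z) :
    ∃ (m : ℕ) (g : 𝕜 → 𝕜), m ≠ 0 ∧ AnalyticAt 𝕜 g a ∧ g a ≠ 0 ∧
      ∀ᶠ z in 𝓝 a, F z = z + (z - a) ^ (m + 1) * g z := by
  have hD : AnalyticAt 𝕜 (fun z ↦ F z - z) a := hF.sub analyticAt_id
  have hD' : deriv (fun z ↦ F z - z) a = 0 := by
    rw [deriv_fun_sub hF.differentiableAt differentiableAt_fun_id, hF', deriv_id'', sub_self]
  have hfinite : analyticOrderAt (fun z ↦ F z - z) a ≠ ⊤ := by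
    simpa [analyticOrderAt_eq_top, sub_eq_zero] using hid
  obtain ⟨n, hn⟩ := ENat.ne_top_iff_exists.1 hfinite
  have htwo : 2 ≤ n := by
    have : ((2 : ℕ) : ℕ∞) ≤ analyticOrderAt (fun z ↦ F z - z) a := by
      refine (natCast_le_analyticOrderAt_iff_iteratedDeriv_eq_zero hD).2 fun i hi ↦ ?_
      interval_cases i
      · simp [hFa]
      · rw [iteratedDeriv_one, hD']
    rw [← hn] at this
    exact_mod_cast this
  obtain ⟨g, hg, hga, hDg⟩ := hD.analyticOrderAt_eq_natCast.1 hn.symm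
  refine ⟨n - 1, g, by omega, hg, hga, hDg.mono fun z hz ↦ ?_⟩
  rw [Nat.sub_add_cancel (by omega), ← smul_eq_mul, ← hz, add_sub_cancel]

lemma analyticAt_iterate {E : Type*} [NormedAddCommGroup E] [NormedSpace 𝕜 E] {f : E → E} {a : E}
    (hf : AnalyticAt 𝕜 f a) (hfa : f a = a) (n : ℕ) : AnalyticAt 𝕜 f^[n] a := by
  induction n with
  | zero => exact analyticAt_id
  | succ n ih => exact ih.comp_of_eq hf hfa

end LocalExpansion

section FatouCoordinate

/-- The approximate Fatou coordinate `z ↦ c / (z - a) ^ m` at a parabolic fixed point `a` of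
multiplicity `m + 1`. It has a pole at `a`, but as a Lean function takes the value `0` there when
`m ≠ 0`. -/
noncomputable def fatouCoord (c a : ℂ) (m : ℕ) (z : ℂ) : ℂ := c / (z - a) ^ m

variable {c a : ℂ} {m : ℕ}

lemma surjective_fatouCoord (hc : c ≠ 0) (hm : m ≠ 0) :
    Function.Surjective (fatouCoord c a m) := by
  intro w
  obtain ⟨u, hu⟩ := IsAlgClosed.exists_pow_nat_eq (c / w) hm.bot_lt
  exact ⟨u + a, by rw [fatouCoord, add_sub_cancel_right, hu, div_div_cancel₀ hc]⟩

lemma neBot_comap_re_fatouCoord_atTop (hc : c ≠ 0) (hm : m ≠ 0) :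
    (comap (fun z ↦ (fatouCoord c a m z).re) atTop).NeBot :=
  atTop_neBot.comap_of_surj (Complex.re_surjective.comp (surjective_fatouCoord hc hm))

lemma comap_re_fatouCoord_atTop_le_nhdsNE (hc : c ≠ 0) (hm : m ≠ 0) :
    comap (fun z ↦ (fatouCoord c a m z).re) atTop ≤ 𝓝[≠] a := by
  set l := comap (fun z ↦ (fatouCoord c a m z).re) atTop
  have hre : Tendsto (fun z ↦ (fatouCoord c a m z).re) l atTop := tendsto_comap
  have hpow : Tendsto (fun z ↦ (z - a) ^ m) l (𝓝 0) := by
    have hinfty : Tendsto (fatouCoord c a m) l (Bornology.cobounded ℂ) :=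
      tendsto_norm_atTop_iff_cobounded.1 (tendsto_atTop_mono (fun z ↦ Complex.re_le_norm _) hre)
    have := (tendsto_inv₀_cobounded.comp hinfty).const_mul c
    simpa [Function.comp_def, fatouCoord, mul_div_cancel₀, hc] using this
  have hnhds : Tendsto id l (𝓝 a) := by
    refine Metric.tendsto_nhds.2 fun r hr ↦ ?_
    filter_upwards [Metric.tendsto_nhds.1 hpow (r ^ m) (pow_pos hr m)] with z hz
    rw [dist_zero_right, norm_pow] at hz
    simpa [dist_eq_norm] using lt_of_pow_lt_pow_left₀ m hr.le hz
  refine tendsto_nhdsWithin_iff.2 ⟨hnhds, ?_⟩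
  filter_upwards [hre.eventually_gt_atTop 0] with z hz
  rintro rfl
  simp [fatouCoord, hm] at hz

lemma fatouCoord_sub_fatouCoord {F g : ℂ → ℂ} {z : ℂ} (hz : z ≠ a)
    (hF : F z = z + (z - a) ^ (m + 1) * g z) :
    fatouCoord c a m (F z) - fatouCoord c a m z =
      c * g z * dslope (fun u : ℂ ↦ ((1 + u) ^ m)⁻¹) 0 ((z - a) ^ m * g z) := by
  have hza : (z - a) ^ m ≠ 0 := pow_ne_zero m (sub_ne_zero.2 hz)
  have hfactor : F z - a = (z - a) * (1 + (z - a) ^ m * g z) := by rw [hF]; ring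
  have hslope := sub_smul_dslope (fun u : ℂ ↦ ((1 + u) ^ m)⁻¹) 0 ((z - a) ^ m * g z)
  simp only [sub_zero, smul_eq_mul, add_zero, one_pow, inv_one] at hslope
  calc fatouCoord c a m (F z) - fatouCoord c a m z
      = c / (z - a) ^ m * (((1 + (z - a) ^ m * g z) ^ m)⁻¹ - 1) := by
        rw [fatouCoord, fatouCoord, hfactor, mul_pow, div_mul_eq_div_div]
        ring
    _ = _ := by
        rw [← hslope]
        field_simp

lemma tendsto_fatouCoord_sub_fatouCoord {F g : ℂ → ℂ} (hm : m ≠ 0) (hg : ContinuousAt g a)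
    (hF : ∀ᶠ z in 𝓝 a, F z = z + (z - a) ^ (m + 1) * g z) :
    Tendsto (fun z ↦ fatouCoord c a m (F z) - fatouCoord c a m z) (𝓝[≠] a)
      (𝓝 (-(c * g a * m))) := by
  set φ : ℂ → ℂ := dslope (fun u : ℂ ↦ ((1 + u) ^ m)⁻¹) 0 with hφ
  have hφ_cont : ContinuousAt φ 0 :=
    continuousAt_dslope_same.2 (hasDerivAt_inv_one_add_pow m).differentiableAt
  have hφ_zero : φ 0 = -m := by rw [hφ, dslope_same, (hasDerivAt_inv_one_add_pow m).deriv]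
  have hu : Tendsto (fun z ↦ (z - a) ^ m * g z) (𝓝 a) (𝓝 0) := by
    have : ContinuousAt (fun z ↦ (z - a) ^ m * g z) a := by fun_prop
    simpa [ContinuousAt, hm] using this
  have hlim : Tendsto (fun z ↦ c * g z * φ ((z - a) ^ m * g z)) (𝓝 a) (𝓝 (-(c * g a * m))) := by
    rw [← mul_neg, ← hφ_zero]
    exact (hg.tendsto.const_mul c).mul (hφ_cont.tendsto.comp hu)
  refine (hlim.mono_left nhdsWithin_le_nhds).congr' ?_
  filter_upwards [self_mem_nhdsWithin, nhdsWithin_le_nhds hF] with z hz hFz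
  exact (fatouCoord_sub_fatouCoord hz hFz).symm

end FatouCoordinate

section Parabolic

variable {F f g : ℂ → ℂ} {a : ℂ} {m q : ℕ}

lemma frequently_tendsto_iterate_nhdsNE_of_eventually_eq (hm : m ≠ 0) (hg : ContinuousAt g a)
    (hga : g a ≠ 0) (hF : ∀ᶠ z in 𝓝 a, F z = z + (z - a) ^ (m + 1) * g z) :
    ∃ᶠ z in 𝓝 a, Tendsto (fun n ↦ F^[n] z) atTop (𝓝[≠] a) := by
  set c : ℂ := -(g a)⁻¹ with hc_def
  have hc : c ≠ 0 := neg_ne_zero.2 (inv_ne_zero hga)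
  have hle := comap_re_fatouCoord_atTop_le_nhdsNE (a := a) hc hm
  have := neBot_comap_re_fatouCoord_atTop (a := a) hc hm
  have hdrift : Tendsto (fun z ↦ (fatouCoord c a m (F z)).re - (fatouCoord c a m z).re)
      (𝓝[≠] a) (𝓝 m) := by
    have h := (Complex.continuous_re.tendsto _).comp
      (tendsto_fatouCoord_sub_fatouCoord (c := c) hm hg hF)
    simpa [Function.comp_def, hc_def, hga] using h
  have hstep : ∀ᶠ z in 𝓝[≠] a,
      (fatouCoord c a m z).re + 1 / 2 ≤ (fatouCoord c a m (F z)).re := by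
    have hhalf : (1 / 2 : ℝ) < m := by
      have : (1 : ℝ) ≤ m := mod_cast hm.bot_lt
      linarith
    filter_upwards [hdrift.eventually_const_lt hhalf] with z hz
    linarith
  have hpetal := eventually_tendsto_iterate_comap_atTop one_half_pos (hle hstep)
  exact (hpetal.mono fun z hz ↦ hz.mono_right hle).frequently.filter_mono
    (hle.trans nhdsWithin_le_nhds)

theorem frequently_tendsto_iterate_nhdsNE (hf : AnalyticAt ℂ f a) (hfa : f a = a) (hq : q ≠ 0)
    (hmult : deriv f a ^ q = 1) (hid : ¬ ∀ᶠ z in 𝓝 a, f^[q] z = z) :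
    ∃ᶠ z in 𝓝 a, Tendsto (fun n ↦ f^[n] z) atTop (𝓝[≠] a) := by
  have hf' : HasDerivAt f (deriv f a) a := hf.differentiableAt.hasDerivAt
  have hmult_ne : deriv f a ≠ 0 := (IsUnit.of_pow_eq_one hmult hq).ne_zero
  have hpunctured : Tendsto f (𝓝[≠] a) (𝓝[≠] a) := by
    simpa only [hfa] using hf'.tendsto_nhdsNE hmult_ne
  obtain ⟨m, g, hm, hg, hga, hexp⟩ := exists_eventually_eq_add_pow_mul (analyticAt_iterate hf hfa q)
    (Function.iterate_fixed hfa q) ((hf'.iterate a hfa q).deriv.trans hmult) hid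
  exact (frequently_tendsto_iterate_nhdsNE_of_eventually_eq hm hg.continuousAt hga hexp).mono
    fun z hz ↦ tendsto_iterate_of_tendsto_iterate_iterate_s4 hq hpunctured hz

end Parabolic

section Quadratic

variable {ω : ℂ}

lemma Pq_zero (ω : ℂ) : Pq ω 0 = 0 := by simp [Pq]

lemma hasDerivAt_Pq (ω z : ℂ) : HasDerivAt (Pq ω) (ω + 2 * z) z := by
  have := ((hasDerivAt_id' z).const_mul ω).fun_add (hasDerivAt_pow 2 z)
  rwa [mul_one, Nat.cast_ofNat, Nat.add_one_sub_one, pow_one] at this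

lemma differentiable_Pq (ω : ℂ) : Differentiable ℂ (Pq ω) :=
  fun z ↦ (hasDerivAt_Pq ω z).differentiableAt

lemma deriv_Pq_zero (ω : ℂ) : deriv (Pq ω) 0 = ω := by
  rw [(hasDerivAt_Pq ω 0).deriv, mul_zero, add_zero]

lemma not_injective_Pq (hω : ω ≠ 0) : ¬ Function.Injective (Pq ω) := fun hinj ↦
  hω (neg_eq_zero.1 (hinj (by simp only [Pq]; ring : Pq ω (-ω) = Pq ω 0)))

lemma not_eventually_iterate_Pq_eq (hω : ω ≠ 0) {q : ℕ} (hq : q ≠ 0) (a : ℂ) :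
    ¬ ∀ᶠ z in 𝓝 a, (Pq ω)^[q] z = z := by
  intro hid
  have hiter : (Pq ω)^[q] = id :=
    AnalyticOnNhd.eq_of_eventuallyEq
      (fun z _ ↦ Differentiable.analyticAt ((differentiable_Pq ω).iterate q) z)
      analyticOnNhd_id hid
  obtain ⟨k, rfl⟩ := Nat.exists_eq_succ_of_ne_zero hq
  exact not_injective_Pq hω (Function.LeftInverse.injective (congrFun hiter))

lemma zero_notMem_basin (ω : ℂ) : (0 : ℂ) ∉ basin ω := fun h ↦ h.2 ⟨0, rfl⟩

lemma mem_basin_of_tendsto_nhdsNE {z : ℂ}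
    (hz : Tendsto (fun n ↦ (Pq ω)^[n] z) atTop (𝓝[≠] 0)) : z ∈ basin ω := by
  obtain ⟨hlim, hne⟩ := tendsto_nhdsWithin_iff.1 hz
  refine ⟨hlim, fun ⟨n, hn⟩ ↦ ?_⟩
  obtain ⟨N, hNn, hN⟩ := ((eventually_ge_atTop n).and hne).exists
  apply hN
  obtain ⟨k, rfl⟩ := Nat.exists_eq_add_of_le' hNn
  rw [Function.iterate_add_apply, hn, Function.iterate_fixed (Pq_zero ω), mem_singleton_iff]

lemma zero_mem_closure_basin (hω : IsOfFinOrder ω) : (0 : ℂ) ∈ closure (basin ω) := by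
  obtain ⟨q, hq, hωq⟩ := isOfFinOrder_iff_pow_eq_one.1 hω
  have hparabolic := frequently_tendsto_iterate_nhdsNE ((differentiable_Pq ω).analyticAt 0)
    (Pq_zero ω) hq.ne' (by rw [deriv_Pq_zero, hωq])
    (not_eventually_iterate_Pq_eq hω.isUnit.ne_zero hq.ne' 0)
  exact mem_closure_iff_frequently.2 (hparabolic.mono fun _ ↦ mem_basin_of_tendsto_nhdsNE)

end Quadratic

theorem fixed_point_on_boundary_of_basin_general {ω : ℂ} (hω : IsOfFinOrder ω) :
    (0 : ℂ) ∉ basin ω ∧ (0 : ℂ) ∈ closure (basin ω) ∧ (0 : ℂ) ∈ frontier (basin ω) :=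
  have hcl := zero_mem_closure_basin hω
  ⟨zero_notMem_basin ω, hcl, hcl, fun hint ↦ zero_notMem_basin ω (interior_subset hint)⟩

/-- The parabolic fixed point lies on the boundary of its basin:
`0 ∉ Λ_ω` but `0` belongs to the closure of `Λ_ω`, i.e. `0 ∈ frontier Λ_ω`. -/
theorem fixed_point_on_boundary_of_basin
    (p q : ℕ) (hq : 2 ≤ q) (hp0 : 0 < p) (hpq : p < q) (hcop : Nat.Coprime p q)
    (ω : ℂ) (hω : ω = Complex.exp (2 * Real.pi * Complex.I * (p : ℂ) / (q : ℂ))) :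
    (0 : ℂ) ∉ basin ω ∧ (0 : ℂ) ∈ closure (basin ω) ∧ (0 : ℂ) ∈ frontier (basin ω) := by
  rw [mul_div_assoc] at hω
  exact fixed_point_on_boundary_of_basin_general
    (hω ▸ (Complex.isPrimitiveRoot_exp_of_coprime p q (by omega) hcop).isOfFinOrder (by omega))
end
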